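/- Let f : ℝ^n → ℝ be continuous and ℤ^n-periodic (f(x+m) = f(x) for all x ∈ ℝ^n and m ∈ ℤ^n), and let g : ℝ^n → ℝ be continuous with compact support. Then lim_{ε → 0⁺} ∫_{ℝ^n} g(x) · f(x/ε) dx = (∫_{[0,1]^n} f(y) dy) · (∫_{ℝ^n} g(x) dx). -/

import Mathlib

open MeasureTheory

/-- The closed unit cube `[0,1]ⁿ` in Euclidean space. -/
def unitCube (n : ℕ) : Set (EuclideanSpace ℝ (Fin n)) :=
  {y | ∀ i, y i ∈ Set.Icc (0 : ℝ) 1}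

lemma unitCube_eq_preimage (n : ℕ) :
    unitCube n = (WithLp.ofLp : EuclideanSpace ℝ (Fin n) → (Fin n → ℝ)) ⁻¹'
      (Set.univ.pi fun _ => Set.Icc (0 : ℝ) 1) := by
  ext y
  simp [unitCube, Pi.le_def, forall_and]

lemma isCompact_unitCube (n : ℕ) : IsCompact (unitCube n) := by
  rw [unitCube_eq_preimage]
  exact ((EuclideanSpace.equiv (Fin n) ℝ).toHomeomorph.isCompact_preimage).2
    (isCompact_univ_pi fun _ => isCompact_Icc)

lemma volume_unitCube (n : ℕ) : volume (unitCube n) = 1 := by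
  rw [unitCube_eq_preimage, (PiLp.volume_preserving_ofLp (Fin n)).measure_preimage
    (MeasurableSet.univ_pi fun _ => measurableSet_Icc).nullMeasurableSet, volume_pi_pi]
  simp

lemma fundDom_ae_eq (n : ℕ) :
    (ZSpan.fundamentalDomain (EuclideanSpace.basisFun (Fin n) ℝ).toBasis :
      Set (EuclideanSpace ℝ (Fin n))) =ᵐ[volume] unitCube n := by
  have h : (ZSpan.fundamentalDomain (EuclideanSpace.basisFun (Fin n) ℝ).toBasis :
      Set (EuclideanSpace ℝ (Fin n))) =
      (WithLp.ofLp : EuclideanSpace ℝ (Fin n) → (Fin n → ℝ)) ⁻¹'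
      (Set.univ.pi fun _ => Set.Ico (0 : ℝ) 1) := by
    ext y
    simp [ZSpan.mem_fundamentalDomain]
  rw [h, unitCube_eq_preimage]
  refine (PiLp.volume_preserving_ofLp (Fin n)).quasiMeasurePreserving.preimage_ae_eq ?_
  have := Measure.univ_pi_Ico_ae_eq_Icc (μ := fun _ : Fin n => (volume : Measure ℝ))
    (f := fun _ => (0 : ℝ)) (g := fun _ => (1 : ℝ))
  rw [← Set.pi_univ_Icc] at this
  exact this

section
variable {n : ℕ} (f : EuclideanSpace ℝ (Fin n) → ℝ)

lemma per_bounded (hf : Continuous f)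
    (hper : ∀ (x : EuclideanSpace ℝ (Fin n)) (m : Fin n → ℤ),
      f (x + (EuclideanSpace.equiv (Fin n) ℝ).symm (fun i => (m i : ℝ))) = f x) :
    ∃ C : ℝ, 0 < C ∧ ∀ x, ‖f x‖ ≤ C := by
  obtain ⟨C, hC⟩ := (isCompact_unitCube n).exists_bound_of_continuousOn hf.continuousOn
  refine ⟨max C 1, by positivity, fun x => ?_⟩
  rw [← hper x (fun i => -⌊x i⌋)]
  refine (hC _ ?_).trans (le_max_left _ _)
  intro i
  have h1 := Int.floor_le (x i)
  have h2 := (Int.lt_floor_add_one (x i)).le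
  simp only [Set.mem_Icc, PiLp.add_apply]
  simp
  constructor <;> linarith

lemma per_integral
    (hper : ∀ (x : EuclideanSpace ℝ (Fin n)) (m : Fin n → ℤ),
      f (x + (EuclideanSpace.equiv (Fin n) ℝ).symm (fun i => (m i : ℝ))) = f x)
    (a : EuclideanSpace ℝ (Fin n)) :
    ∫ y in unitCube n, f (a + y) = ∫ y in unitCube n, f y := by
  let b := (EuclideanSpace.basisFun (Fin n) ℝ).toBasis
  have hF := ZSpan.isAddFundamentalDomain' b volume
  have : Countable (Submodule.span ℤ (Set.range b)).toAddSubgroup :=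
    inferInstanceAs (Countable (Submodule.span ℤ (Set.range b)))
  have hF2 := hF.vadd_of_comm a
  rw [← setIntegral_congr_set (fundDom_ae_eq n), ← setIntegral_congr_set (fundDom_ae_eq n)]
  have key := hF.setIntegral_eq hF2 (f := f) (by
    rintro ⟨γ, hγ⟩ x
    have hγ' := (b.mem_span_iff_repr_mem ℤ γ).1 hγ
    choose m hm using hγ'
    have : γ = (EuclideanSpace.equiv (Fin n) ℝ).symm (fun i => (m i : ℝ)) := by
      ext i
      have := hm i
      simp [b] at this
      simp [this]
    change f (γ + x) = f x
    rw [add_comm, this, hper])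
  rw [key]
  exact ((measurePreserving_add_left volume a).setIntegral_image_emb
    (measurableEmbedding_addLeft a) f _).symm
end

lemma transl_small {n : ℕ} (g : EuclideanSpace ℝ (Fin n) → ℝ) (hg : Continuous g)
    (hgsupp : HasCompactSupport g) {η : ℝ} (hη : 0 < η) :
    ∃ δ > 0, ∀ z : EuclideanSpace ℝ (Fin n), ‖z‖ < δ → ∫ x, ‖g x - g (x - z)‖ < η := by
  have hc : ContinuousOn (fun z : EuclideanSpace ℝ (Fin n) => ∫ x, ‖g x - g (x - z)‖)
      (Metric.closedBall 0 1) := by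
    apply continuousOn_integral_of_compact_support
      (k := Metric.cthickening 1 (tsupport g)) (hgsupp.isCompact.cthickening)
    · apply Continuous.continuousOn
      unfold Function.uncurry
      fun_prop
    · intro z x hz hx
      have h1 : g x = 0 := by
        by_contra h
        exact hx (Metric.self_subset_cthickening _ (subset_tsupport _ h))
      have h2 : g (x - z) = 0 := by
        by_contra h
        refine hx (Metric.mem_cthickening_of_dist_le x (x - z) 1 _ (subset_tsupport _ h) ?_)
        simpa [dist_eq_norm] using hz
      simp [h1, h2]
  have h0 := hc.continuousAt (Metric.closedBall_mem_nhds 0 one_pos)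
  obtain ⟨δ, hδ, h⟩ := Metric.continuousAt_iff.1 h0 η hη
  refine ⟨δ, hδ, fun z hz => ?_⟩
  have := h (x := z) (by simpa using hz)
  simp only [sub_zero, sub_self, norm_zero, integral_zero, dist_zero_right] at this
  exact (le_abs_self _).trans_lt this

/-- Riemann–Lebesgue lemma for periodic functions: if `f : ℝⁿ → ℝ` is continuous
and `ℤⁿ`-periodic and `g` is continuous with compact support, then
`∫ g(x) f(x/ε) dx → (∫_{[0,1]ⁿ} f) · (∫ g)` as `ε → 0⁺`. -/
theorem riemann_lebesgue_periodic {n : ℕ}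
    (f : EuclideanSpace ℝ (Fin n) → ℝ) (hf : Continuous f)
    (hper : ∀ (x : EuclideanSpace ℝ (Fin n)) (m : Fin n → ℤ),
      f (x + (EuclideanSpace.equiv (Fin n) ℝ).symm (fun i => (m i : ℝ))) = f x)
    (g : EuclideanSpace ℝ (Fin n) → ℝ) (hg : Continuous g)
    (hgsupp : HasCompactSupport g) :
    Filter.Tendsto (fun ε : ℝ => ∫ x, g x * f (ε⁻¹ • x))
      (nhdsWithin 0 (Set.Ioi 0))
      (nhds ((∫ y in unitCube n, f y) * ∫ x, g x)) := by
  obtain ⟨C, hC0, hC⟩ := per_bounded f hf hper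
  have hgi : Integrable g := hg.integrable_of_hasCompactSupport hgsupp
  have hQ := volume_unitCube n
  have : IsFiniteMeasure (volume.restrict (unitCube n)) := ⟨by simp [hQ]⟩
  obtain ⟨R, hR⟩ := (isCompact_unitCube n).exists_bound_of_continuousOn continuous_id.continuousOn
  rw [Metric.tendsto_nhdsWithin_nhds]
  intro η hη
  obtain ⟨δ, hδ, hsmall⟩ := transl_small g hg hgsupp (η := η / (2 * C)) (by positivity)
  refine ⟨δ / (|R| + 1), by positivity, fun {ε} hε hεd => ?_⟩
  have hε : 0 < ε := hε
  have hεd : ε < δ / (|R| + 1) := by simpa [abs_of_pos hε] using hεd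
  have hεd : ε * (|R| + 1) < δ := (lt_div_iff₀ (by positivity)).1 hεd
  -- joint integrability
  have hprod : Integrable (Function.uncurry fun (y x : EuclideanSpace ℝ (Fin n)) =>
      g x * f (ε⁻¹ • x + y)) ((volume.restrict (unitCube n)).prod volume) := by
    have h1 : Integrable (fun p : EuclideanSpace ℝ (Fin n) × EuclideanSpace ℝ (Fin n) =>
        (1 : ℝ) * g p.2) ((volume.restrict (unitCube n)).prod volume) :=
      (integrable_const (1 : ℝ)).mul_prod hgi
    have h2 := h1.mul_bdd (c := C) (g := fun p => f (ε⁻¹ • p.2 + p.1))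
      (by
        apply Continuous.aestronglyMeasurable
        fun_prop) (Filter.Eventually.of_forall fun p => hC _)
    simpa [Function.uncurry_def] using h2
  have hmean : ∫ y in unitCube n, ∫ x, g x * f (ε⁻¹ • x + y) =
      (∫ y in unitCube n, f y) * ∫ x, g x := by
    rw [integral_integral_swap hprod]
    simp_rw [integral_const_mul, per_integral f hper]
    rw [integral_mul_const, mul_comm]
  have hconst : ∫ x, g x * f (ε⁻¹ • x) =
      ∫ y in unitCube n, ∫ x, g x * f (ε⁻¹ • x) := by
    simp [Measure.real, hQ]
  have hFi : Integrable (fun y => ∫ x, g x * f (ε⁻¹ • x + y)) (volume.restrict (unitCube n)) :=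
    hprod.integral_prod_left
  rw [dist_eq_norm, ← hmean, hconst, ← integral_sub (integrable_const _) hFi]
  have hbd : ∀ y ∈ unitCube n,
      ‖(∫ x, g x * f (ε⁻¹ • x)) - ∫ x, g x * f (ε⁻¹ • x + y)‖ ≤ η / 2 := by
    intro y hy
    have htr : ∫ x, g x * f (ε⁻¹ • x + y) = ∫ x, g (x - ε • y) * f (ε⁻¹ • x) := by
      rw [← integral_sub_right_eq_self (fun x => g x * f (ε⁻¹ • x + y)) (ε • y)]
      congr 1
      ext x
      rw [smul_sub, smul_smul, inv_mul_cancel₀ hε.ne', one_smul, sub_add_cancel]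
    have hgi2 : Integrable (fun x => g (x - ε • y)) := hgi.comp_sub_right _
    have hfm : AEStronglyMeasurable (fun x => f (ε⁻¹ • x)) volume := by
      apply Continuous.aestronglyMeasurable
      fun_prop
    have hfb : ∀ᵐ x, ‖f (ε⁻¹ • x)‖ ≤ C := Filter.Eventually.of_forall fun p => hC _
    rw [htr, ← integral_sub (hgi.mul_bdd (c := C) hfm hfb) (hgi2.mul_bdd (c := C) hfm hfb)]
    have hz : ‖ε • y‖ < δ := by
      rw [norm_smul, Real.norm_of_nonneg hε.le]
      refine lt_of_le_of_lt ?_ hεd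
      have : ‖y‖ ≤ R := hR y hy
      have := le_abs_self R
      gcongr
      linarith
    calc _ ≤ ∫ x, ‖g x - g (x - ε • y)‖ * C := by
          refine norm_integral_le_of_norm_le ((hgi.sub hgi2).norm.mul_const C) ?_
          refine Filter.Eventually.of_forall fun x => ?_
          rw [← sub_mul, norm_mul]
          gcongr
          exact hC _
      _ = (∫ x, ‖g x - g (x - ε • y)‖) * C := integral_mul_const _ _
      _ ≤ η / (2 * C) * C := by
          gcongr
          exact (hsmall _ hz).le
      _ = η / 2 := by field_simp
  have hfin := norm_setIntegral_le_of_norm_le_const (μ := volume) (s := unitCube n)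
    (by simp [hQ]) hbd
  simp only [Measure.real, hQ, ENNReal.toReal_one, mul_one] at hfin
  linarith
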